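/- Let X be an m×n complex matrix and let l = min(m, n). Then the supremum of |Tr((Lᴴ R)ᴴ X)| over all l×m complex matrices L with ‖L‖_c ≤ 1 and all l×n complex matrices R with ‖R‖_c ≤ 1 equals the infimum of ‖η‖₂ · ‖C‖_∞ · ‖ξ‖₂ over all factorizations X = Δ_m(η)ᴴ C Δ_n(ξ) with η ∈ ℂᵐ, ξ ∈ ℂⁿ, and C an m×n complex matrix; moreover both the supremum and the infimum are attained. -/

import Mathlib

open Matrix BigOperators

/-- The ℓ²→ℓ² operator norm of a complex matrix. -/
noncomputable def opNorm {m n : ℕ} (A : Matrix (Fin m) (Fin n) ℂ) : ℝ :=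
  ‖(Matrix.toEuclideanLin A).toContinuousLinearMap‖

/-- The Euclidean norm of a complex vector. -/
noncomputable def eNorm {n : ℕ} (ξ : Fin n → ℂ) : ℝ :=
  Real.sqrt (∑ j, ‖ξ j‖ ^ 2)

/-- The column norm: the maximum Euclidean norm of a column. -/
noncomputable def colNorm {l m : ℕ} (L : Matrix (Fin l) (Fin m) ℂ) : ℝ :=
  ⨆ j : Fin m, Real.sqrt (∑ i, ‖L i j‖ ^ 2)


lemma sep_aux {ι : Type*} [Fintype ι] [DecidableEq ι] (A : Set (ι → ℝ)) (hA : Convex ℝ A)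
    (h0 : (0 : ι → ℝ) ∈ A) (hpos : ∀ v ∈ A, ∃ i, 0 ≤ v i) :
    ∃ w : ι → ℝ, (∀ i, 0 ≤ w i) ∧ ∑ i, w i = 1 ∧ ∀ v ∈ A, 0 ≤ ∑ i, w i * v i := by
  have hs : IsOpen {v : ι → ℝ | ∀ i, v i < 0} := by
    simp only [Set.ofPred_forall]
    exact isOpen_iInter_of_finite fun i => isOpen_lt (continuous_apply i) continuous_const
  have hc : Convex ℝ {v : ι → ℝ | ∀ i, v i < 0} := by
    simp only [Set.ofPred_forall]
    refine convex_iInter fun i => ?_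
    exact (convex_Iio (0 : ℝ)).is_linear_preimage (f := fun v : ι → ℝ => v i)
      ⟨fun _ _ => rfl, fun _ _ => rfl⟩
  have hd : Disjoint {v : ι → ℝ | ∀ i, v i < 0} A := by
    rw [Set.disjoint_left]
    intro v hv hvA
    obtain ⟨i, hi⟩ := hpos v hvA
    exact absurd (hv i) (not_lt.mpr hi)
  obtain ⟨f, u, h1, h2⟩ := geometric_hahn_banach_open hc hs hA hd
  have hf : ∀ v : ι → ℝ, f v = ∑ i, f (Pi.single i 1) * v i := by
    intro v
    have := LinearMap.pi_apply_eq_sum_univ (f : (ι → ℝ) →ₗ[ℝ] ℝ) v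
    simp only [ContinuousLinearMap.coe_coe, smul_eq_mul] at this
    rw [this]
    refine Finset.sum_congr rfl fun i _ => ?_
    rw [mul_comm]
    congr 2
    ext j; simp [Pi.single_apply, eq_comm]
  set w : ι → ℝ := fun i => f (Pi.single i 1) with hw
  have hu0 : u ≤ 0 := by simpa using h2 0 h0
  have hone : ∀ ε : ℝ, 0 < ε → f (fun _ => -ε) < u := fun ε hε => h1 _ (fun i => by simpa using hε)
  have hW : 0 < ∑ i, w i := by
    have := hone 1 one_pos
    rw [hf] at this
    simp at this
    simp only [hw]; linarith
  have hwi : ∀ i, 0 ≤ w i := by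
    intro i
    refine le_of_forall_pos_le_add fun ε hε => ?_
    set δ := ε / ∑ i, w i with hδ
    have hδ0 : 0 < δ := by positivity
    have := h1 (fun j => - δ - (Pi.single i (1:ℝ) : ι → ℝ) j) (fun j => by
      by_cases hj : j = i
      · subst hj; simp; linarith
      · simp [hj]; linarith)
    rw [hf] at this
    simp only [mul_sub, Finset.sum_sub_distrib, ← Finset.sum_mul] at this
    simp [Pi.single_apply] at this
    have h3 : (∑ i, w i) * δ = ε := by rw [hδ]; field_simp
    have h4 : -((∑ i, w i) * δ) - w i < u := by simpa [hw, Pi.single_apply] using this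
    linarith
  have hu : 0 ≤ u := by
    refine le_of_forall_pos_le_add fun ε hε => ?_
    have := hone (ε / ∑ i, w i) (by positivity)
    rw [hf, ← Finset.sum_mul] at this
    have h3 : (∑ i, w i) * (-(ε / ∑ i, w i)) = -ε := by field_simp
    have h4 : (∑ i, w i) * (-(ε / ∑ i, w i)) < u := this
    linarith
  refine ⟨fun i => w i / ∑ j, w j, fun i => div_nonneg (hwi i) hW.le, ?_, ?_⟩
  · rw [← Finset.sum_div]; exact div_self hW.ne'
  · intro v hv
    have : ∑ i, w i / (∑ j, w j) * v i = (∑ i, w i * v i) / ∑ j, w j := by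
      rw [Finset.sum_div]; exact Finset.sum_congr rfl fun i _ => by ring
    rw [this]
    refine div_nonneg ?_ hW.le
    have := h2 v hv
    rw [hf] at this
    exact hu.trans this

lemma proj_aux {E : Type*} [NormedAddCommGroup E] [InnerProductSpace ℂ E] {k l : ℕ} (hkl : k ≤ l)
    (x : Fin k → E) :
    ∃ T : E → (Fin l → ℂ), (∀ y, ∑ i, ‖T y i‖ ^ 2 ≤ ‖y‖ ^ 2) ∧
      ∀ a y, ∑ i, star (T (x a) i) * T y i = inner ℂ (x a) y := by
  let V := Submodule.span ℂ (Set.range x)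
  have : FiniteDimensional ℂ V := FiniteDimensional.span_of_finite ℂ (Set.finite_range x)
  have hr : Module.finrank ℂ V ≤ l := by
    have := finrank_range_le_card (R := ℂ) x
    simp only [Fintype.card_fin] at this
    exact this.trans hkl
  let b := stdOrthonormalBasis ℂ V
  let T : E → (Fin l → ℂ) := fun y i =>
    if h : (i : ℕ) < Module.finrank ℂ V then inner ℂ ((b ⟨i, h⟩ : V) : E) y else 0
  have key : ∀ (M : Type) [AddCommMonoid M] (g : Fin l → M),
      (∀ i : Fin l, ¬ (i : ℕ) < Module.finrank ℂ V → g i = 0) →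
      ∑ i, g i = ∑ j : Fin (Module.finrank ℂ V), g (Fin.castLE hr j) := by
    intro M _ g hg
    symm
    refine Finset.sum_of_injOn (Fin.castLE hr) (Fin.castLE_injective hr).injOn (by simp) ?_ (by simp)
    intro i _ hi
    apply hg
    intro h
    exact hi ⟨⟨i, h⟩, by simp, rfl⟩
  have hon : Orthonormal ℂ (fun i => ((b i : V) : E)) :=
    b.orthonormal.comp_linearIsometry V.subtypeₗᵢ
  refine ⟨T, fun y => ?_, fun a y => ?_⟩
  · rw [key ℝ _ (fun i hi => by simp [T, hi])]
    have := hon.sum_inner_products_le y (s := Finset.univ)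
    simpa [T] using this
  · rw [key ℂ _ (fun i hi => by simp [T, hi])]
    let xa : V := ⟨x a, Submodule.subset_span ⟨a, rfl⟩⟩
    have h := b.sum_repr' xa
    have h' : x a = ∑ i, inner ℂ ((b i : V) : E) (x a) • ((b i : V) : E) := by
      have := congrArg (V.subtypeₗᵢ) h
      simpa [xa] using this.symm
    conv_rhs => rw [h']
    rw [sum_inner]
    refine Finset.sum_congr rfl fun i _ => ?_
    simp [T, inner_smul_left]

lemma amgm_aux {K P Q t : ℝ} (hP : 0 ≤ P) (hQ : 0 ≤ Q) (hK : 0 ≤ K)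
    (h : ∀ s : ℝ, 0 < s → t ≤ K / 2 * (s ^ 2 * P + Q / s ^ 2)) :
    t ≤ K * (Real.sqrt P * Real.sqrt Q) := by
  have hε : ∀ ε : ℝ, 0 < ε → t ≤ K * (Real.sqrt (P + ε) * Real.sqrt (Q + ε)) := by
    intro ε hε
    have hp : 0 < Real.sqrt (P + ε) := Real.sqrt_pos.mpr (by linarith)
    have hq : 0 < Real.sqrt (Q + ε) := Real.sqrt_pos.mpr (by linarith)
    have hp2 : Real.sqrt (P + ε) ^ 2 = P + ε := Real.sq_sqrt (by linarith)
    have hq2 : Real.sqrt (Q + ε) ^ 2 = Q + ε := Real.sq_sqrt (by linarith)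
    have h1 := h (Real.sqrt (Real.sqrt (Q + ε) / Real.sqrt (P + ε))) (Real.sqrt_pos.mpr (by positivity))
    rw [Real.sq_sqrt (by positivity)] at h1
    set p := Real.sqrt (P + ε)
    set q := Real.sqrt (Q + ε)
    have h2 : q / p * P + Q / (q / p) ≤ 2 * (p * q) := by
      have e1 : q / p * P ≤ q / p * p ^ 2 := by
        apply mul_le_mul_of_nonneg_left _ (by positivity); linarith
      have e2 : Q / (q / p) ≤ q ^ 2 / (q / p) := by
        apply div_le_div_of_nonneg_right _ (by positivity); linarith
      have e3 : q / p * p ^ 2 = p * q := by field_simp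
      have e4 : q ^ 2 / (q / p) = p * q := by field_simp
      linarith
    nlinarith
  have hc : Continuous fun ε : ℝ => K * (Real.sqrt (P + ε) * Real.sqrt (Q + ε)) := by fun_prop
  have ht := (hc.tendsto 0).mono_left (nhdsWithin_le_nhds (s := Set.Ioi 0))
  simp only [add_zero] at ht
  exact ge_of_tendsto ht (by filter_upwards [self_mem_nhdsWithin] with ε h using hε ε h)

lemma trace_aux {l m n : ℕ} (X : Matrix (Fin m) (Fin n) ℂ) (L : Matrix (Fin l) (Fin m) ℂ)
    (R : Matrix (Fin l) (Fin n) ℂ) :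
    ((Lᴴ * R)ᴴ * X).trace = ∑ i, ∑ j, X i j * ∑ k, star (R k j) * L k i := by
  rw [Matrix.trace, Finset.sum_comm]
  refine Finset.sum_congr rfl fun j _ => ?_
  rw [Matrix.diag_apply, Matrix.mul_apply]
  refine Finset.sum_congr rfl fun i _ => ?_
  rw [mul_comm, Matrix.conjTranspose_mul, Matrix.conjTranspose_conjTranspose, Matrix.mul_apply]
  simp [Matrix.conjTranspose_apply]

lemma colNorm_le_one_iff {l m : ℕ} (L : Matrix (Fin l) (Fin m) ℂ) :
    colNorm L ≤ 1 ↔ ∀ j, ∑ i, ‖L i j‖ ^ 2 ≤ 1 := by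
  constructor
  · intro h j
    have := (le_ciSup (f := fun j : Fin m => Real.sqrt (∑ i, ‖L i j‖ ^ 2))
      (Set.finite_range _).bddAbove j).trans h
    simpa [Real.sqrt_le_one] using this
  · intro h
    refine Real.iSup_le (fun j => ?_) zero_le_one
    simpa using h j

lemma dim_aux {m n : ℕ} {K : ℝ} (X : Matrix (Fin m) (Fin n) ℂ)
    (hK : ∀ (L : Matrix (Fin (min m n)) (Fin m) ℂ) (R : Matrix (Fin (min m n)) (Fin n) ℂ),
      colNorm L ≤ 1 → colNorm R ≤ 1 → ‖((Lᴴ * R)ᴴ * X).trace‖ ≤ K)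
    {E : Type*} [NormedAddCommGroup E] [InnerProductSpace ℂ E]
    (x : Fin m → E) (y : Fin n → E) (hx : ∀ i, ‖x i‖ ≤ 1) (hy : ∀ j, ‖y j‖ ≤ 1) :
    ‖∑ i, ∑ j, X i j * inner ℂ (y j) (x i)‖ ≤ K := by
  obtain ⟨T, hT1, hT2⟩ : ∃ T : E → (Fin (min m n) → ℂ), (∀ y, ∑ i, ‖T y i‖ ^ 2 ≤ ‖y‖ ^ 2) ∧
      ∀ i j, ∑ k, star (T (y j) k) * T (x i) k = inner ℂ (y j) (x i) := by
    rcases le_total m n with h | h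
    · obtain ⟨T, hT1, hT2⟩ := proj_aux (le_min le_rfl h) x
      refine ⟨T, hT1, fun i j => ?_⟩
      rw [← inner_conj_symm, ← hT2, map_sum]
      refine Finset.sum_congr rfl fun k _ => ?_
      simp [mul_comm]
    · obtain ⟨T, hT1, hT2⟩ := proj_aux (le_min h le_rfl) y
      exact ⟨T, hT1, fun i j => hT2 j _⟩
  have := hK (Matrix.of fun k i => T (x i) k) (Matrix.of fun k j => T (y j) k)
    ((colNorm_le_one_iff _).2 fun i => (hT1 (x i)).trans (pow_le_one₀ (norm_nonneg _) (hx i)))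
    ((colNorm_le_one_iff _).2 fun i => (hT1 (y i)).trans (pow_le_one₀ (norm_nonneg _) (hy i)))
  rw [trace_aux] at this
  simpa only [Matrix.of_apply, hT2] using this

lemma dim_aux2 {m n : ℕ} {K : ℝ} (X : Matrix (Fin m) (Fin n) ℂ)
    (hK : ∀ (L : Matrix (Fin (min m n)) (Fin m) ℂ) (R : Matrix (Fin (min m n)) (Fin n) ℂ),
      colNorm L ≤ 1 → colNorm R ≤ 1 → ‖((Lᴴ * R)ᴴ * X).trace‖ ≤ K)
    {E : Type*} [NormedAddCommGroup E] [InnerProductSpace ℂ E]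
    (x : Fin m → E) (y : Fin n → E) (s r : ℝ) (hs : 0 ≤ s) (hr : 0 ≤ r)
    (hx : ∀ i, ‖x i‖ ≤ s) (hy : ∀ j, ‖y j‖ ≤ r) :
    ‖∑ i, ∑ j, X i j * inner ℂ (y j) (x i)‖ ≤ K * (s * r) := by
  rcases hs.eq_or_lt with rfl | hs
  · have : ∀ i, x i = 0 := fun i => norm_le_zero_iff.1 (hx i)
    simp [this]
  rcases hr.eq_or_lt with rfl | hr
  · have : ∀ i, y i = 0 := fun i => norm_le_zero_iff.1 (hy i)
    simp [this]
  have h := dim_aux X hK (fun i => ((s⁻¹ : ℝ) : ℂ) • x i) (fun j => ((r⁻¹ : ℝ) : ℂ) • y j)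
    (fun i => by
      rw [norm_smul, Complex.norm_real, Real.norm_of_nonneg (by positivity), inv_mul_le_iff₀ hs]
      simpa using hx i)
    (fun i => by
      rw [norm_smul, Complex.norm_real, Real.norm_of_nonneg (by positivity), inv_mul_le_iff₀ hr]
      simpa using hy i)
  have e : ∑ i, ∑ j, X i j * inner ℂ (((r⁻¹ : ℝ) : ℂ) • y j) (((s⁻¹ : ℝ) : ℂ) • x i)
      = (((s⁻¹ * r⁻¹ : ℝ)) : ℂ) * ∑ i, ∑ j, X i j * inner ℂ (y j) (x i) := by
    simp only [Finset.mul_sum]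
    refine Finset.sum_congr rfl fun i _ => Finset.sum_congr rfl fun j _ => ?_
    rw [inner_smul_left, inner_smul_right, Complex.conj_ofReal]
    push_cast; ring
  rw [e, norm_mul, Complex.norm_real, Real.norm_of_nonneg (by positivity), ← mul_inv,
    inv_mul_le_iff₀ (by positivity)] at h
  linarith

open scoped MatrixOrder ComplexOrder Matrix.Norms.L2Operator in
lemma weights_aux {m n : ℕ} [NeZero m] [NeZero n] {K : ℝ} (hK0 : 0 ≤ K)
    (X : Matrix (Fin m) (Fin n) ℂ)
    (hK : ∀ (L : Matrix (Fin (min m n)) (Fin m) ℂ) (R : Matrix (Fin (min m n)) (Fin n) ℂ),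
      colNorm L ≤ 1 → colNorm R ≤ 1 → ‖((Lᴴ * R)ᴴ * X).trace‖ ≤ K) :
    ∃ (p : Fin m → ℝ) (q : Fin n → ℝ), (∀ i, 0 ≤ p i) ∧ (∀ j, 0 ≤ q j) ∧ ∑ i, p i = 1 ∧
      ∑ j, q j = 1 ∧ ∀ (u : Fin m → ℂ) (v : Fin n → ℂ),
        (∑ i, ∑ j, X i j * (v j * u i)).re ≤
          K / 2 * (∑ i, p i * ‖u i‖ ^ 2 + ∑ j, q j * ‖v j‖ ^ 2) := by
  let Φ : Matrix (Fin m ⊕ Fin n) (Fin m ⊕ Fin n) ℂ → (Fin m × Fin n → ℝ) := fun G a =>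
    K / 2 * ((G (Sum.inl a.1) (Sum.inl a.1)).re + (G (Sum.inr a.2) (Sum.inr a.2)).re) -
      (∑ i, ∑ j, X i j * G (Sum.inr j) (Sum.inl i)).re
  have hadd : ∀ G H, Φ (G + H) = Φ G + Φ H := by
    intro G H
    ext a
    simp only [Φ, Matrix.add_apply, mul_add, Finset.sum_add_distrib, Complex.add_re, Pi.add_apply]
    ring
  have hsmul : ∀ (c : ℝ) G, Φ (c • G) = c • Φ G := by
    intro c G
    ext a
    have : ∑ i, ∑ j, X i j * (c • G) (Sum.inr j) (Sum.inl i)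
        = (c : ℂ) * ∑ i, ∑ j, X i j * G (Sum.inr j) (Sum.inl i) := by
      simp only [Finset.mul_sum]
      refine Finset.sum_congr rfl fun i _ => Finset.sum_congr rfl fun j _ => ?_
      rw [Matrix.smul_apply, Complex.real_smul]; ring
    simp only [Φ, this]
    simp only [Complex.re_ofReal_mul, Pi.smul_apply, smul_eq_mul, Matrix.smul_apply,
      Complex.smul_re]
    ring
  obtain ⟨w, hw0, hw1, hw⟩ := sep_aux (Φ '' {G | G.PosSemidef})
    (by
      rintro _ ⟨G, hG, rfl⟩ _ ⟨H, hH, rfl⟩ a b ha hb _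
      refine ⟨a • G + b • H, ?_, by rw [hadd, hsmul, hsmul]⟩
      exact (Matrix.PosSemidef.smul hG ha).add (Matrix.PosSemidef.smul hH hb))
    ⟨0, Matrix.PosSemidef.zero, by simpa using hsmul 0 0⟩
    (by
      rintro _ ⟨G, hG, rfl⟩
      obtain ⟨B, rfl⟩ := CStarAlgebra.nonneg_iff_eq_star_mul_self.mp (Matrix.PosSemidef.nonneg hG)
      let z : Fin m ⊕ Fin n → EuclideanSpace ℂ (Fin m ⊕ Fin n) := fun c => WithLp.toLp 2 fun k => B k c
      have hz : ∀ a b, (star B * B) a b = inner ℂ (z a) (z b) := by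
        intro a b
        rw [Matrix.mul_apply, PiLp.inner_apply]
        refine Finset.sum_congr rfl fun k _ => ?_
        simp [z, Matrix.star_apply, mul_comm]
      have hzz : ∀ a, ((star B * B) a a).re = ‖z a‖ ^ 2 := by
        intro a
        rw [hz, inner_self_eq_norm_sq_to_K]
        norm_cast
      obtain ⟨i, hi⟩ := Finite.exists_max fun i : Fin m => ‖z (Sum.inl i)‖
      obtain ⟨j, hj⟩ := Finite.exists_max fun j : Fin n => ‖z (Sum.inr j)‖
      refine ⟨(i, j), ?_⟩
      have h := dim_aux2 X hK (fun i => z (Sum.inl i)) (fun j => z (Sum.inr j)) _ _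
        (norm_nonneg _) (norm_nonneg _) hi hj
      have h2 := (Complex.re_le_norm _).trans h
      simp only [Φ, hzz]
      simp only [hz]
      nlinarith [mul_nonneg hK0 (sq_nonneg (‖z (Sum.inl i)‖ - ‖z (Sum.inr j)‖))])
  refine ⟨fun i => ∑ j, w (i, j), fun j => ∑ i, w (i, j), fun i => Finset.sum_nonneg fun j _ => hw0 _,
    fun j => Finset.sum_nonneg fun i _ => hw0 _, ?_, ?_, ?_⟩
  · rw [← hw1, Fintype.sum_prod_type]
  · rw [← hw1, Fintype.sum_prod_type_right]
  · intro u v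
    let c : Fin m ⊕ Fin n → ℂ := Sum.elim u (fun j => star (v j))
    have h := hw _ ⟨vecMulVec (star c) c, Matrix.posSemidef_vecMulVec_star_self c, rfl⟩
    have e : ∀ z : ℂ, (star z * z).re = ‖z‖ ^ 2 := by
      intro z
      rw [Complex.star_def, ← Complex.normSq_eq_conj_mul_self, Complex.ofReal_re,
        Complex.normSq_eq_norm_sq]
    simp only [Φ, vecMulVec_apply, Pi.star_apply, e] at h
    simp only [c, Sum.elim_inl, Sum.elim_inr, star_star, norm_star] at h
    simp only [mul_sub, Finset.sum_sub_distrib, ← Finset.sum_mul, hw1, one_mul] at h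
    have e2 : ∑ a : Fin m × Fin n, w a * (K / 2 * (‖u a.1‖ ^ 2 + ‖v a.2‖ ^ 2)) =
        K / 2 * (∑ i, (∑ j, w (i, j)) * ‖u i‖ ^ 2 + ∑ j, (∑ i, w (i, j)) * ‖v j‖ ^ 2) := by
      simp only [Finset.sum_mul]
      rw [Finset.sum_comm (f := fun (j : Fin n) (i : Fin m) => w (i, j) * ‖v j‖ ^ 2),
        Fintype.sum_prod_type, ← Finset.sum_add_distrib, Finset.mul_sum]
      refine Finset.sum_congr rfl fun i _ => ?_
      rw [← Finset.sum_add_distrib, Finset.mul_sum]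
      exact Finset.sum_congr rfl fun j _ => by ring
    rw [e2] at h
    linarith

lemma eNorm_eq {n : ℕ} (v : Fin n → ℂ) : eNorm v = ‖(WithLp.toLp 2 v : EuclideanSpace ℂ (Fin n))‖ := by
  rw [EuclideanSpace.norm_eq]; rfl

lemma opNorm_nonneg {m n : ℕ} (C : Matrix (Fin m) (Fin n) ℂ) : 0 ≤ opNorm C := norm_nonneg _

lemma eNorm_nonneg {n : ℕ} (v : Fin n → ℂ) : 0 ≤ eNorm v := Real.sqrt_nonneg _

lemma eNorm_sq {n : ℕ} (v : Fin n → ℂ) : eNorm v ^ 2 = ∑ j, ‖v j‖ ^ 2 :=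
  Real.sq_sqrt (Finset.sum_nonneg fun _ _ => by positivity)

lemma bilin_le {m n : ℕ} (C : Matrix (Fin m) (Fin n) ℂ) (u : Fin m → ℂ) (v : Fin n → ℂ) :
    ‖∑ i, ∑ j, u i * C i j * v j‖ ≤ opNorm C * (eNorm u * eNorm v) := by
  let a : EuclideanSpace ℂ (Fin m) := WithLp.toLp 2 (fun i => star (u i))
  let b : EuclideanSpace ℂ (Fin n) := WithLp.toLp 2 v
  have h : ∑ i, ∑ j, u i * C i j * v j =
      inner ℂ a ((Matrix.toEuclideanLin C).toContinuousLinearMap b) := by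
    rw [PiLp.inner_apply]
    refine Finset.sum_congr rfl fun i _ => ?_
    simp [a, b, Matrix.toLpLin_apply, Matrix.mulVec, dotProduct, Finset.mul_sum, mul_comm,
      mul_left_comm]
  have ha : ‖a‖ = eNorm u := by
    rw [EuclideanSpace.norm_eq]; simp [a, eNorm]
  have hb : ‖b‖ = eNorm v := (eNorm_eq v).symm
  rw [h, ← ha, ← hb]
  calc _ ≤ ‖a‖ * ‖(Matrix.toEuclideanLin C).toContinuousLinearMap b‖ := norm_inner_le_norm _ _
    _ ≤ ‖a‖ * (opNorm C * ‖b‖) := by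
        gcongr
        exact ContinuousLinearMap.le_opNorm _ _
    _ = _ := by ring

lemma sum_eNorm_le {l m : ℕ} (L : Matrix (Fin l) (Fin m) ℂ) (hL : colNorm L ≤ 1) (η : Fin m → ℂ) :
    Real.sqrt (∑ k, eNorm (fun i => L k i * star (η i)) ^ 2) ≤ eNorm η := by
  refine Real.sqrt_le_sqrt ?_
  simp only [eNorm_sq]
  rw [Finset.sum_comm]
  refine Finset.sum_le_sum fun i _ => ?_
  simp only [norm_mul, norm_star, mul_pow]
  rw [← Finset.sum_mul]
  exact mul_le_of_le_one_left (by positivity) ((colNorm_le_one_iff L).1 hL i)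

lemma easy_aux {l m n : ℕ} (L : Matrix (Fin l) (Fin m) ℂ) (R : Matrix (Fin l) (Fin n) ℂ)
    (hL : colNorm L ≤ 1) (hR : colNorm R ≤ 1) (η : Fin m → ℂ) (C : Matrix (Fin m) (Fin n) ℂ)
    (ξ : Fin n → ℂ) :
    ‖((Lᴴ * R)ᴴ * ((Matrix.diagonal η)ᴴ * C * Matrix.diagonal ξ)).trace‖ ≤
      eNorm η * opNorm C * eNorm ξ := by
  have h : ((Lᴴ * R)ᴴ * ((Matrix.diagonal η)ᴴ * C * Matrix.diagonal ξ)).trace =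
      ∑ k, ∑ i, ∑ j, (L k i * star (η i)) * C i j * (star (R k j) * ξ j) := by
    rw [trace_aux]
    simp only [Finset.mul_sum]
    rw [Finset.sum_comm (s := (Finset.univ : Finset (Fin l)))]
    refine Finset.sum_congr rfl fun i _ => ?_
    rw [Finset.sum_comm]
    refine Finset.sum_congr rfl fun k _ => Finset.sum_congr rfl fun j _ => ?_
    rw [Matrix.mul_diagonal, Matrix.diagonal_conjTranspose, Matrix.diagonal_mul, Pi.star_apply]
    ring
  rw [h]
  have hR' : Real.sqrt (∑ k, eNorm (fun j => star (R k j) * ξ j) ^ 2) ≤ eNorm ξ := by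
    have := sum_eNorm_le R hR ξ
    simp only [eNorm_sq, norm_mul, norm_star] at this ⊢
    exact this
  calc _ ≤ ∑ k, ‖∑ i, ∑ j, (L k i * star (η i)) * C i j * (star (R k j) * ξ j)‖ := norm_sum_le _ _
    _ ≤ ∑ k, opNorm C * (eNorm (fun i => L k i * star (η i)) * eNorm (fun j => star (R k j) * ξ j)) :=
        Finset.sum_le_sum fun k _ => bilin_le C _ _
    _ = opNorm C * ∑ k, (eNorm (fun i => L k i * star (η i)) * eNorm (fun j => star (R k j) * ξ j)) := by
        rw [Finset.mul_sum]
    _ ≤ opNorm C * (eNorm η * eNorm ξ) := by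
        refine mul_le_mul_of_nonneg_left ?_ (opNorm_nonneg C)
        refine (Real.sum_mul_le_sqrt_mul_sqrt _ _ _).trans ?_
        exact mul_le_mul (sum_eNorm_le L hL η) hR' (Real.sqrt_nonneg _) (eNorm_nonneg _)
    _ = _ := by ring

lemma factor_aux {m n : ℕ} {K : ℝ} (hK0 : 0 ≤ K) (X : Matrix (Fin m) (Fin n) ℂ)
    (hK : ∀ (L : Matrix (Fin (min m n)) (Fin m) ℂ) (R : Matrix (Fin (min m n)) (Fin n) ℂ),
      colNorm L ≤ 1 → colNorm R ≤ 1 → ‖((Lᴴ * R)ᴴ * X).trace‖ ≤ K) :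
    ∃ (η : Fin m → ℂ) (C : Matrix (Fin m) (Fin n) ℂ) (ξ : Fin n → ℂ),
      X = (Matrix.diagonal η)ᴴ * C * Matrix.diagonal ξ ∧ eNorm η * opNorm C * eNorm ξ ≤ K := by
  rcases Nat.eq_zero_or_pos m with rfl | hm
  · exact ⟨0, 0, 0, by ext i; exact i.elim0, by simpa [eNorm] using hK0⟩
  rcases Nat.eq_zero_or_pos n with rfl | hn
  · exact ⟨0, 0, 0, by ext i j; exact j.elim0, by simpa [eNorm] using hK0⟩
  have : NeZero m := ⟨hm.ne'⟩
  have : NeZero n := ⟨hn.ne'⟩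
  obtain ⟨p, q, hp, hq, hp1, hq1, hpq⟩ := weights_aux hK0 X hK
  have hb : ∀ (u : Fin m → ℂ) (v : Fin n → ℂ), (∑ i, ∑ j, X i j * (v j * u i)).re ≤
      K * (Real.sqrt (∑ i, p i * ‖u i‖ ^ 2) * Real.sqrt (∑ j, q j * ‖v j‖ ^ 2)) := by
    intro u v
    refine amgm_aux (Finset.sum_nonneg fun i _ => mul_nonneg (hp i) (by positivity))
      (Finset.sum_nonneg fun i _ => mul_nonneg (hq i) (by positivity)) hK0 fun s hs => ?_
    have h := hpq (fun i => (s : ℂ) * u i) (fun j => ((s⁻¹ : ℝ) : ℂ) * v j)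
    have e : ∀ i j, X i j * (((s⁻¹ : ℝ) : ℂ) * v j * ((s : ℂ) * u i)) = X i j * (v j * u i) := by
      intro i j
      have : (s : ℂ) ≠ 0 := by exact_mod_cast hs.ne'
      push_cast
      field_simp
    simp only [e, norm_mul, Complex.norm_real, Real.norm_of_nonneg hs.le,
      Real.norm_of_nonneg (inv_nonneg.2 hs.le), mul_pow] at h
    convert h using 3
    · rw [Finset.mul_sum]; exact Finset.sum_congr rfl fun i _ => by ring
    · rw [Finset.sum_div]; exact Finset.sum_congr rfl fun i _ => by rw [inv_pow]; ring
  have hz : ∀ i j, p i = 0 ∨ q j = 0 → X i j = 0 := by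
    intro i j hij
    have h := hb (Pi.single i 1) (Pi.single j (star (X i j)))
    have e1 : ∑ i', ∑ j', X i' j' * ((Pi.single j (star (X i j)) : Fin n → ℂ) j' *
        (Pi.single i 1 : Fin m → ℂ) i') = X i j * star (X i j) := by
      rw [Finset.sum_eq_single i, Finset.sum_eq_single j]
      · simp
      · intro b _ hbj; simp [hbj]
      · simp
      · intro b _ hbi; simp [hbi]
      · simp
    have e2 : ∑ i', p i' * ‖(Pi.single i 1 : Fin m → ℂ) i'‖ ^ 2 = p i := by
      rw [Finset.sum_eq_single i]
      · simp
      · intro b _ hbi; simp [hbi]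
      · simp
    have e3 : ∑ j', q j' * ‖(Pi.single j (star (X i j)) : Fin n → ℂ) j'‖ ^ 2 = q j * ‖X i j‖ ^ 2 := by
      rw [Finset.sum_eq_single j]
      · simp
      · intro b _ hbi; simp [hbi]
      · simp
    rw [e1, e2, e3] at h
    have e4 : Real.sqrt (p i) * Real.sqrt (q j * ‖X i j‖ ^ 2) = 0 := by
      rcases hij with h | h <;> simp [h]
    rw [e4, mul_zero, Complex.star_def, Complex.mul_conj, Complex.ofReal_re] at h
    exact Complex.normSq_eq_zero.1 (le_antisymm h (Complex.normSq_nonneg _))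
  let η : Fin m → ℂ := fun i => (Real.sqrt (p i) : ℂ)
  let ξ : Fin n → ℂ := fun j => (Real.sqrt (q j) : ℂ)
  let C : Matrix (Fin m) (Fin n) ℂ := Matrix.of fun i j => (η i)⁻¹ * X i j * (ξ j)⁻¹
  have hη : eNorm η = 1 := by
    simp [eNorm, η, Real.sq_sqrt (hp _), hp1]
  have hξ : eNorm ξ = 1 := by
    simp [eNorm, ξ, Real.sq_sqrt (hq _), hq1]
  refine ⟨η, C, ξ, ?_, ?_⟩
  · ext i j
    rw [Matrix.mul_diagonal, Matrix.diagonal_conjTranspose, Matrix.diagonal_mul, Pi.star_apply]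
    have hs : star (η i) = η i := by simp [η]
    rw [hs]
    by_cases h : p i = 0 ∨ q j = 0
    · simp [C, hz i j h]
    · push Not at h
      have h1 : η i ≠ 0 := by
        simpa [η, Real.sqrt_eq_zero (hp i)] using h.1
      have h2 : ξ j ≠ 0 := by
        simpa [ξ, Real.sqrt_eq_zero (hq j)] using h.2
      simp only [C, Matrix.of_apply]
      field_simp
  · rw [hη, hξ, one_mul, mul_one]
    refine ContinuousLinearMap.opNorm_le_bound _ hK0 fun b => ?_
    set c := (Matrix.toEuclideanLin C).toContinuousLinearMap b with hc
    have hci : ∀ i, c i = ∑ j, C i j * b j := by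
      intro i
      simp [hc, Matrix.toLpLin_apply, Matrix.mulVec, dotProduct]
    have h := hb (fun i => star (c i) * (η i)⁻¹) (fun j => (ξ j)⁻¹ * b j)
    have e1 : ∑ i, ∑ j, X i j * ((ξ j)⁻¹ * b j * (star (c i) * (η i)⁻¹)) = ((‖c‖ ^ 2 : ℝ) : ℂ) := by
      rw [EuclideanSpace.norm_sq_eq]
      push_cast
      refine Finset.sum_congr rfl fun i _ => ?_
      rw [← Complex.conj_mul']
      conv_rhs => rw [hci i, ← hci i]
      nth_rewrite 3 [hci i]
      rw [Finset.mul_sum]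
      refine Finset.sum_congr rfl fun j _ => ?_
      simp only [C, Matrix.of_apply, Complex.star_def]
      ring
    have aux : ∀ t : ℝ, 0 ≤ t → ∀ r : ℝ, 0 ≤ r → t * (r * (Real.sqrt t)⁻¹ ^ 2) ≤ r := by
      intro t ht r hr
      rw [inv_pow, Real.sq_sqrt ht]
      rcases ht.eq_or_lt with rfl | ht
      · simpa using hr
      · apply le_of_eq; field_simp
    have e2 : Real.sqrt (∑ i, p i * ‖star (c i) * (η i)⁻¹‖ ^ 2) ≤ ‖c‖ := by
      rw [EuclideanSpace.norm_eq]
      refine Real.sqrt_le_sqrt (Finset.sum_le_sum fun i _ => ?_)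
      have := aux (p i) (hp i) (‖c i‖ ^ 2) (by positivity)
      rw [norm_mul, norm_star, mul_pow, norm_inv, Complex.norm_real,
        Real.norm_of_nonneg (Real.sqrt_nonneg _)]
      exact this
    have e3 : Real.sqrt (∑ j, q j * ‖(ξ j)⁻¹ * b j‖ ^ 2) ≤ ‖b‖ := by
      rw [EuclideanSpace.norm_eq]
      refine Real.sqrt_le_sqrt (Finset.sum_le_sum fun j _ => ?_)
      have := aux (q j) (hq j) (‖b j‖ ^ 2) (by positivity)
      rw [norm_mul, mul_pow, norm_inv, Complex.norm_real,
        Real.norm_of_nonneg (Real.sqrt_nonneg _), mul_comm (_ ^ 2)]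
      exact this
    rw [e1, Complex.ofReal_re] at h
    have h5 : ‖c‖ ^ 2 ≤ K * (‖c‖ * ‖b‖) :=
      h.trans (mul_le_mul_of_nonneg_left
        (mul_le_mul e2 e3 (Real.sqrt_nonneg _) (norm_nonneg _)) hK0)
    rcases (norm_nonneg c).eq_or_lt with h0 | h0
    · rw [← h0]; positivity
    · by_contra hcon
      push Not at hcon
      nlinarith

lemma compact_aux (l m : ℕ) : IsCompact {L : Matrix (Fin l) (Fin m) ℂ | colNorm L ≤ 1} := by
  have h1 : IsCompact (Set.univ.pi fun _ : Fin l => Set.univ.pi fun _ : Fin m =>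
      Metric.closedBall (0 : ℂ) 1) :=
    isCompact_univ_pi fun _ => isCompact_univ_pi fun _ => isCompact_closedBall _ _
  refine IsCompact.of_isClosed_subset h1 ?_ ?_
  · simp only [colNorm_le_one_iff, Set.ofPred_forall]
    refine isClosed_iInter fun j => isClosed_le ?_ continuous_const
    refine continuous_finsetSum _ fun i _ => ?_
    exact ((continuous_apply_apply (ρ := fun _ _ => ℂ) i j).norm).pow 2
  · intro L hL i _ j _
    have := (colNorm_le_one_iff L).1 hL j
    have h2 : ‖L i j‖ ^ 2 ≤ 1 :=
      (Finset.single_le_sum (f := fun i => ‖L i j‖ ^ 2) (fun _ _ => by positivity)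
        (Finset.mem_univ i)).trans this
    rw [mem_closedBall_zero_iff]
    exact (sq_le_one_iff₀ (norm_nonneg _)).1 h2

/-- The supremum of `|Tr((Lᴴ R)ᴴ X)|` over `‖L‖_c ≤ 1`, `‖R‖_c ≤ 1` with inner
dimension `min m n` equals the infimum of `‖η‖₂‖C‖_∞‖ξ‖₂` over factorizations
`X = Δ_m(η)ᴴ C Δ_n(ξ)`; both the supremum and the infimum are attained. -/
theorem sup_trace_pairing_eq_inf_factorization
    (m n : ℕ) (X : Matrix (Fin m) (Fin n) ℂ) :
    (⨆ p : {p : Matrix (Fin (min m n)) (Fin m) ℂ × Matrix (Fin (min m n)) (Fin n) ℂ //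
        colNorm p.1 ≤ 1 ∧ colNorm p.2 ≤ 1},
      ‖((p.1.1ᴴ * p.1.2)ᴴ * X).trace‖) =
    (⨅ q : {q : (Fin m → ℂ) × Matrix (Fin m) (Fin n) ℂ × (Fin n → ℂ) //
        X = (Matrix.diagonal q.1)ᴴ * q.2.1 * Matrix.diagonal q.2.2},
      eNorm q.1.1 * opNorm q.1.2.1 * eNorm q.1.2.2) ∧
    (∃ p : {p : Matrix (Fin (min m n)) (Fin m) ℂ × Matrix (Fin (min m n)) (Fin n) ℂ //
        colNorm p.1 ≤ 1 ∧ colNorm p.2 ≤ 1},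
      ‖((p.1.1ᴴ * p.1.2)ᴴ * X).trace‖ =
        ⨆ p' : {p' : Matrix (Fin (min m n)) (Fin m) ℂ × Matrix (Fin (min m n)) (Fin n) ℂ //
            colNorm p'.1 ≤ 1 ∧ colNorm p'.2 ≤ 1},
          ‖((p'.1.1ᴴ * p'.1.2)ᴴ * X).trace‖) ∧
    (∃ q : {q : (Fin m → ℂ) × Matrix (Fin m) (Fin n) ℂ × (Fin n → ℂ) //
        X = (Matrix.diagonal q.1)ᴴ * q.2.1 * Matrix.diagonal q.2.2},
      eNorm q.1.1 * opNorm q.1.2.1 * eNorm q.1.2.2 =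
        ⨅ q' : {q' : (Fin m → ℂ) × Matrix (Fin m) (Fin n) ℂ × (Fin n → ℂ) //
            X = (Matrix.diagonal q'.1)ᴴ * q'.2.1 * Matrix.diagonal q'.2.2},
          eNorm q'.1.1 * opNorm q'.1.2.1 * eNorm q'.1.2.2) := by
  obtain ⟨p, hpS, hpmax⟩ := ((compact_aux (min m n) m).prod (compact_aux (min m n) n)).exists_isMaxOn
    ⟨(0, 0), by constructor <;> simp [colNorm_le_one_iff]⟩
    (f := fun p => ‖((p.1ᴴ * p.2)ᴴ * X).trace‖) (by
      apply Continuous.continuousOn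
      fun_prop)
  set K := ‖((p.1ᴴ * p.2)ᴴ * X).trace‖ with hKdef
  have hK : ∀ (L : Matrix (Fin (min m n)) (Fin m) ℂ) (R : Matrix (Fin (min m n)) (Fin n) ℂ),
      colNorm L ≤ 1 → colNorm R ≤ 1 → ‖((Lᴴ * R)ᴴ * X).trace‖ ≤ K :=
    fun L R hL hR => hpmax (a := (L, R)) ⟨hL, hR⟩
  obtain ⟨η, C, ξ, hX, hle⟩ := factor_aux (norm_nonneg _) X hK
  have heasy : ∀ q : {q : (Fin m → ℂ) × Matrix (Fin m) (Fin n) ℂ × (Fin n → ℂ) //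
        X = (Matrix.diagonal q.1)ᴴ * q.2.1 * Matrix.diagonal q.2.2},
      K ≤ eNorm q.1.1 * opNorm q.1.2.1 * eNorm q.1.2.2 := by
    rintro ⟨⟨η, C, ξ⟩, hq⟩
    have := easy_aux p.1 p.2 hpS.1 hpS.2 η C ξ
    rw [← hq] at this
    exact this
  have hsup : IsGreatest (Set.range fun p : {p : Matrix (Fin (min m n)) (Fin m) ℂ ×
      Matrix (Fin (min m n)) (Fin n) ℂ // colNorm p.1 ≤ 1 ∧ colNorm p.2 ≤ 1} =>
      ‖((p.1.1ᴴ * p.1.2)ᴴ * X).trace‖) K :=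
    ⟨⟨⟨p, hpS⟩, rfl⟩, by rintro _ ⟨⟨⟨L, R⟩, h⟩, rfl⟩; exact hK L R h.1 h.2⟩
  have hinf : IsLeast (Set.range fun q : {q : (Fin m → ℂ) × Matrix (Fin m) (Fin n) ℂ × (Fin n → ℂ) //
        X = (Matrix.diagonal q.1)ᴴ * q.2.1 * Matrix.diagonal q.2.2} =>
      eNorm q.1.1 * opNorm q.1.2.1 * eNorm q.1.2.2) K :=
    ⟨⟨⟨(η, C, ξ), hX⟩, le_antisymm hle (heasy ⟨(η, C, ξ), hX⟩)⟩, by rintro _ ⟨q, rfl⟩; exact heasy q⟩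
  have e1 := hsup.csSup_eq
  have e2 := hinf.csInf_eq
  rw [sSup_range] at e1
  rw [sInf_range] at e2
  rw [e1, e2]
  exact ⟨rfl, hsup.1, hinf.1⟩
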